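/- (Performance difference) Let G(x,u) = A x + B u + f(x,u) with ‖f(x,u)‖ ≤ β(‖x‖² + ‖u‖²) for ‖x‖ + ‖u‖ ≤ r_nl; let γ ∈ (0,1], Q ⪰ I, R ⪰ I, and K be such that √γ·(A+BK) is stable with Lyapunov solution P. Let x_{t+1} = √γ·G(x_t, K x_t) be the damped nonlinear trajectory from x₀, and suppose x₀ᵀ P x₀ ≤ r_nl²/(4β²‖P‖_op³). Then the nonlinear cost J_nl(K | γ, x₀) := Σ_{t=0}^∞ x_tᵀ (Q + KᵀRK) x_t converges, and J_nl(K | γ, x₀) − x₀ᵀ P x₀ = Σ_{t=0}^∞ γ · f(x_t, K x_t)ᵀ P ( G(x_t, K x_t) + (A + BK) x_t ). -/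

import Mathlib

/-!
Rescaling by `√γ` turns the damped trajectory into `x_{t+1} = M x_t + w_t` with `M = √γ (A + BK)`
and `w_t = √γ f(x_t, K x_t)`, and `P` solves `P = S + MᵀPM` with `S = Q + KᵀRK`. For
`V(x) = xᵀPx` and `q(x) = xᵀSx` this gives the one-step identity
`V(x_{t+1}) = V(x_t) - q(x_t) + w_tᵀP(x_{t+1} + M x_t)`, whose sum over `t` is the claimed formula
once `q` and `V` are summable along the trajectory.

For summability, put `p = ‖P‖ ≥ 1`, so that `V ≤ p q`. On the sublevel set `V ≤ r² / (4β²p³)` the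
remainder bound applies and makes `wᵀPw ≤ q / (4p²)`; Young's inequality with weight `1 / (2p)` then
yields `V(x_{t+1}) ≤ V(x_t) - q(x_t) / 4`. Hence the sublevel set is invariant and `∑ q ≤ 4 V(x₀)`.
-/

open Matrix

/-- A real square matrix is stable if every complex eigenvalue has modulus `< 1`. -/
def IsStable {n : ℕ} (M : Matrix (Fin n) (Fin n) ℝ) : Prop :=
  ∀ μ ∈ spectrum ℂ (M.map Complex.ofReal), ‖μ‖ < 1

/-- Euclidean operator norm of a real matrix. -/
noncomputable def opNorm {p q : ℕ} (M : Matrix (Fin p) (Fin q) ℝ) : ℝ :=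
  ‖LinearMap.toContinuousLinearMap (Matrix.toEuclideanLin M)‖

/-- Euclidean norm of a vector in `ℝ^n`. -/
noncomputable def evnorm {n : ℕ} (x : Fin n → ℝ) : ℝ :=
  ‖(WithLp.equiv 2 (Fin n → ℝ)).symm x‖

/-- `P_{K,γ} = Σ_t γ^t ((A+BK)^t)ᵀ (Q + KᵀRK) (A+BK)^t`, the solution of the discounted
Lyapunov equation when `√γ (A+BK)` is stable. -/
noncomputable def lyapP {d m : ℕ} (A : Matrix (Fin d) (Fin d) ℝ) (B : Matrix (Fin d) (Fin m) ℝ)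
    (Q : Matrix (Fin d) (Fin d) ℝ) (R : Matrix (Fin m) (Fin m) ℝ)
    (K : Matrix (Fin m) (Fin d) ℝ) (γ : ℝ) : Matrix (Fin d) (Fin d) ℝ :=
  ∑' t : ℕ, γ ^ t • (((A + B * K) ^ t)ᵀ * (Q + Kᵀ * R * K) * (A + B * K) ^ t)

section GelfandFormula

open Filter
open scoped NNReal

variable {E : Type*} [NormedRing E] [NormedAlgebra ℂ E] [CompleteSpace E] {a : E}

theorem spectralRadius_lt_one_of_forall_norm_lt_one (h : ∀ μ ∈ spectrum ℂ a, ‖μ‖ < 1) :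
    spectralRadius ℂ a < 1 := by
  cases subsingleton_or_nontrivial E
  · simp
  · exact spectrum.spectralRadius_lt_of_forall_lt a (r := 1) h

theorem eventually_norm_pow_le_of_spectralRadius_lt {r : ℝ≥0} (h : spectralRadius ℂ a < r) :
    ∀ᶠ n : ℕ in atTop, ‖a ^ n‖ ≤ (r : ℝ) ^ n := by
  have root_lt := (spectrum.pow_nnnorm_pow_one_div_tendsto_nhds_spectralRadius a).eventually
    (gt_mem_nhds h)
  filter_upwards [root_lt, eventually_gt_atTop 0] with n hn hpos
  have hle := (ENNReal.rpow_inv_le_iff (Nat.cast_pos.2 hpos)).1 (by simpa using hn.le)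
  rw [ENNReal.rpow_natCast] at hle
  exact_mod_cast hle

end GelfandFormula

section QuadraticForm

variable {l n R : Type*}

theorem isClosed_setOf_posSemidef [Finite n] [CommRing R] [PartialOrder R] [StarRing R]
    [TopologicalSpace R] [IsTopologicalRing R] [ContinuousStar R] [OrderClosedTopology R] :
    IsClosed {M : Matrix n n R | M.PosSemidef} := by
  have := Fintype.ofFinite n
  simp only [posSemidef_iff_dotProduct_mulVec, Set.ofPred_and, Set.ofPred_forall]
  exact (isClosed_eq (by fun_prop) continuous_id).inter
    (isClosed_iInter fun v ↦ isClosed_le continuous_const (by fun_prop))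

theorem posSemidef_tsum [Finite n] {ι : Type*} {F : ι → Matrix n n ℝ}
    (hF : ∀ i, (F i).PosSemidef) (hsum : Summable F) : (∑' i, F i).PosSemidef :=
  isClosed_setOf_posSemidef.mem_of_tendsto hsum.hasSum
    (.of_forall fun s ↦ posSemidef_sum s fun i _ ↦ hF i)

theorem posSemidef_of_posSemidef_sub_one [Finite n] [DecidableEq n] {P : Matrix n n ℝ}
    (hP : (P - 1).PosSemidef) : P.PosSemidef := by
  simpa using hP.add .one

theorem isSymm_of_posSemidef {P : Matrix n n ℝ} (hP : P.PosSemidef) : P.IsSymm := by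
  simpa using hP.isHermitian

variable [Fintype n]

theorem dotProduct_mulVec_comm_of_isSymm [CommSemiring R] {P : Matrix n n R} (hP : P.IsSymm)
    (v w : n → R) : v ⬝ᵥ P *ᵥ w = w ⬝ᵥ P *ᵥ v := by
  rw [dotProduct_mulVec, ← mulVec_transpose, hP.eq, dotProduct_comm]

theorem dotProduct_transpose_mul_mul_mulVec [Fintype l] [CommSemiring R] (M : Matrix l n R)
    (P : Matrix l l R) (v : n → R) : v ⬝ᵥ (Mᵀ * P * M) *ᵥ v = M *ᵥ v ⬝ᵥ P *ᵥ (M *ᵥ v) := by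
  rw [← mulVec_mulVec, ← mulVec_mulVec, dotProduct_mulVec, vecMul_transpose]

variable {P S : Matrix n n ℝ}

theorem posSemidef_transpose_mul_mul [Finite l] (hP : P.PosSemidef) (M : Matrix n l ℝ) :
    (Mᵀ * P * M).PosSemidef := by
  have := Fintype.ofFinite l
  simpa using hP.conjTranspose_mul_mul_same M

theorem dotProduct_mulVec_nonneg_of_posSemidef (hP : P.PosSemidef) (v : n → ℝ) :
    0 ≤ v ⬝ᵥ P *ᵥ v := by
  simpa using hP.dotProduct_mulVec_nonneg v

theorem dotProduct_mulVec_le_of_posSemidef_sub (h : (S - P).PosSemidef) (v : n → ℝ) :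
    v ⬝ᵥ P *ᵥ v ≤ v ⬝ᵥ S *ᵥ v := by
  simpa [sub_mulVec] using dotProduct_mulVec_nonneg_of_posSemidef h v

theorem add_dotProduct_mulVec_add_le (hP : P.PosSemidef) {θ : ℝ} (hθ : 0 < θ) (v w : n → ℝ) :
    (v + w) ⬝ᵥ P *ᵥ (v + w) ≤ (1 + θ) * (v ⬝ᵥ P *ᵥ v) + (1 + θ⁻¹) * (w ⬝ᵥ P *ᵥ w) := by
  have hsymm := dotProduct_mulVec_comm_of_isSymm (isSymm_of_posSemidef hP) w v
  have hsq : 0 ≤ (θ • v - w) ⬝ᵥ P *ᵥ (θ • v - w) := dotProduct_mulVec_nonneg_of_posSemidef hP _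
  have hdiff : (1 + θ) * (v ⬝ᵥ P *ᵥ v) + (1 + θ⁻¹) * (w ⬝ᵥ P *ᵥ w)
      - (v + w) ⬝ᵥ P *ᵥ (v + w) = θ⁻¹ * ((θ • v - w) ⬝ᵥ P *ᵥ (θ • v - w)) := by
    simp only [mulVec_add, mulVec_sub, mulVec_smul, dotProduct_add, dotProduct_sub, add_dotProduct,
      sub_dotProduct, dotProduct_smul, smul_dotProduct, smul_eq_mul, hsymm]
    field_simp
    ring
  exact sub_nonneg.1 (hdiff ▸ mul_nonneg (inv_nonneg.2 hθ.le) hsq)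

end QuadraticForm

section LyapunovSeries

open Filter

/-- The series `Σ_t (Mᵗ)ᵀ S Mᵗ`, which solves `P = S + MᵀPM` when it converges. The discount of
`lyapP` is absorbed into `M = √γ (A + BK)`. -/
noncomputable def lyapunovSeries {n R : Type*} [Fintype n] [DecidableEq n] [CommRing R]
    [TopologicalSpace R] (M S : Matrix n n R) : Matrix n n R :=
  ∑' t : ℕ, (M ^ t)ᵀ * S * M ^ t

theorem lyapunovSeries_eq_add {n R : Type*} [Fintype n] [DecidableEq n] [CommRing R]
    [TopologicalSpace R] [IsTopologicalRing R] [T2Space R] {M S : Matrix n n R}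
    (hsum : Summable fun t : ℕ ↦ (M ^ t)ᵀ * S * M ^ t) :
    lyapunovSeries M S = S + Mᵀ * lyapunovSeries M S * M := by
  have hshift (t : ℕ) : (M ^ (t + 1))ᵀ * S * M ^ (t + 1) = Mᵀ * ((M ^ t)ᵀ * S * M ^ t) * M := by
    simp only [pow_succ M t, transpose_mul, Matrix.mul_assoc]
  calc lyapunovSeries M S
    _ = S + ∑' t : ℕ, Mᵀ * ((M ^ t)ᵀ * S * M ^ t) * M := by
      rw [lyapunovSeries, hsum.tsum_eq_zero_add, tsum_congr hshift]
      simp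
    _ = S + Mᵀ * lyapunovSeries M S * M := by
      rw [(hsum.mul_left _).tsum_mul_right, hsum.tsum_mul_left, lyapunovSeries]

theorem posSemidef_sub_one_of_lyapunov {n : Type*} [Fintype n] [DecidableEq n]
    {P S M : Matrix n n ℝ} (hP : P.PosSemidef) (hS : (S - 1).PosSemidef)
    (hlyap : P = S + Mᵀ * P * M) : (P - 1).PosSemidef := by
  rw [hlyap, add_sub_right_comm]
  exact hS.add (posSemidef_transpose_mul_mul hP M)

theorem posSemidef_lyapunovSeries {n : Type*} [Fintype n] [DecidableEq n] {M S : Matrix n n ℝ}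
    (hS : S.PosSemidef) (hsum : Summable fun t : ℕ ↦ (M ^ t)ᵀ * S * M ^ t) :
    (lyapunovSeries M S).PosSemidef :=
  posSemidef_tsum (fun t ↦ posSemidef_transpose_mul_mul hS (M ^ t)) hsum

theorem lyapP_eq_lyapunovSeries {d m : ℕ} (A : Matrix (Fin d) (Fin d) ℝ)
    (B : Matrix (Fin d) (Fin m) ℝ) (Q : Matrix (Fin d) (Fin d) ℝ) (R : Matrix (Fin m) (Fin m) ℝ)
    (K : Matrix (Fin m) (Fin d) ℝ) {γ : ℝ} (hγ : 0 ≤ γ) :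
    lyapP A B Q R K γ = lyapunovSeries (√γ • (A + B * K)) (Q + Kᵀ * R * K) := by
  refine tsum_congr fun t ↦ ?_
  rw [smul_pow, transpose_smul, Matrix.smul_mul, Matrix.smul_mul, Matrix.mul_smul,
    smul_smul, ← mul_pow, Real.mul_self_sqrt hγ]

attribute [local instance] Matrix.frobeniusNormedRing Matrix.frobeniusNormedAlgebra

theorem IsStable.exists_eventually_norm_pow_le {d : ℕ} {M : Matrix (Fin d) (Fin d) ℝ}
    (hM : IsStable M) : ∃ r : ℝ, 0 ≤ r ∧ r < 1 ∧ ∀ᶠ t : ℕ in atTop, ‖M ^ t‖ ≤ r ^ t := by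
  obtain ⟨r, hr, hr_lt⟩ := ENNReal.lt_iff_exists_nnreal_btwn.1
    (spectralRadius_lt_one_of_forall_norm_lt_one hM)
  refine ⟨r, r.coe_nonneg, by exact_mod_cast hr_lt, ?_⟩
  filter_upwards [eventually_norm_pow_le_of_spectralRadius_lt hr] with t ht
  have hmap : (M ^ t).map Complex.ofReal = M.map Complex.ofReal ^ t :=
    map_pow Complex.ofRealHom.mapMatrix M t
  rwa [← hmap, frobenius_norm_map_eq _ _ Complex.norm_real] at ht

theorem IsStable.summable_transpose_pow_mul_mul_pow {d : ℕ} {M : Matrix (Fin d) (Fin d) ℝ}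
    (hM : IsStable M) (S : Matrix (Fin d) (Fin d) ℝ) :
    Summable fun t : ℕ ↦ (M ^ t)ᵀ * S * M ^ t := by
  obtain ⟨r, hr_nonneg, hr_lt, hpow⟩ := hM.exists_eventually_norm_pow_le
  have hsq : r ^ 2 < 1 := pow_lt_one₀ hr_nonneg hr_lt two_ne_zero
  have hgeom := (summable_geometric_of_lt_one (sq_nonneg r) hsq).mul_left ‖S‖
  refine .of_norm_bounded_eventually_nat hgeom ?_
  filter_upwards [hpow] with t ht
  calc ‖(M ^ t)ᵀ * S * M ^ t‖
    _ ≤ ‖(M ^ t)ᵀ‖ * ‖S‖ * ‖M ^ t‖ := norm_mul₃_le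
    _ = ‖M ^ t‖ * ‖S‖ * ‖M ^ t‖ := by rw [frobenius_norm_transpose]
    _ ≤ r ^ t * ‖S‖ * r ^ t := by gcongr
    _ = ‖S‖ * (r ^ 2) ^ t := by ring

end LyapunovSeries

section Telescoping

theorem summable_of_decrease_on_sublevel {V q : ℕ → ℝ} {ρ c : ℝ} (hc : 0 < c)
    (hV : ∀ t, 0 ≤ V t) (hq : ∀ t, 0 ≤ q t) (h0 : V 0 ≤ ρ)
    (hdec : ∀ t, V t ≤ ρ → V (t + 1) ≤ V t - c * q t) : Summable q := by
  have hsub (t : ℕ) : V t ≤ ρ := by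
    induction t with
    | zero => exact h0
    | succ t ih => linarith [hdec t ih, mul_nonneg hc.le (hq t)]
  refine summable_of_sum_range_le (c := V 0 / c) hq fun N ↦ ?_
  rw [le_div_iff₀' hc, Finset.mul_sum]
  calc ∑ t ∈ Finset.range N, c * q t
    _ ≤ ∑ t ∈ Finset.range N, (V t - V (t + 1)) :=
      Finset.sum_le_sum fun t _ ↦ by linarith [hdec t (hsub t)]
    _ = V 0 - V N := Finset.sum_range_sub' V N
    _ ≤ V 0 := sub_le_self _ (hV N)

theorem tsum_sub_zero_eq_tsum_of_succ_eq {E : Type*} [AddCommGroup E] [TopologicalSpace E]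
    [IsTopologicalAddGroup E] [T2Space E] {V q δ : ℕ → E} (hV : Summable V) (hq : Summable q)
    (hstep : ∀ t, V (t + 1) = V t - q t + δ t) : ∑' t, q t - V 0 = ∑' t, δ t := by
  have hV' : Summable fun t ↦ V (t + 1) := (summable_nat_add_iff 1).2 hV
  have hδ : δ = fun t ↦ q t + V (t + 1) - V t := by
    ext t
    rw [hstep]
    abel
  rw [hδ, (hq.add hV').tsum_sub hV, hq.tsum_add hV', hV.tsum_eq_zero_add]
  abel

end Telescoping

section PerturbedLinearSystem

variable {n : Type*} [Fintype n] {P S M : Matrix n n ℝ}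

theorem dotProduct_mulVec_eq_of_lyapunov (hlyap : P = S + Mᵀ * P * M) (v : n → ℝ) :
    v ⬝ᵥ P *ᵥ v = v ⬝ᵥ S *ᵥ v + M *ᵥ v ⬝ᵥ P *ᵥ (M *ᵥ v) := by
  rw [← dotProduct_transpose_mul_mul_mulVec, ← dotProduct_add, ← add_mulVec, ← hlyap]

theorem dotProduct_mulVec_le_of_lyapunov (hP : P.PosSemidef) (hlyap : P = S + Mᵀ * P * M)
    (v : n → ℝ) : v ⬝ᵥ S *ᵥ v ≤ v ⬝ᵥ P *ᵥ v := by
  rw [dotProduct_mulVec_eq_of_lyapunov hlyap v]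
  exact le_add_of_nonneg_right (dotProduct_mulVec_nonneg_of_posSemidef hP _)

theorem lyapunov_step_eq (hP : P.IsSymm) (hlyap : P = S + Mᵀ * P * M) (v w : n → ℝ) :
    (M *ᵥ v + w) ⬝ᵥ P *ᵥ (M *ᵥ v + w)
      = v ⬝ᵥ P *ᵥ v - v ⬝ᵥ S *ᵥ v + w ⬝ᵥ P *ᵥ (M *ᵥ v + w + M *ᵥ v) := by
  simp only [dotProduct_mulVec_eq_of_lyapunov hlyap v, mulVec_add, dotProduct_add, add_dotProduct,
    dotProduct_mulVec_comm_of_isSymm hP (M *ᵥ v) w]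
  ring

theorem lyapunov_step_le (hP : P.PosSemidef) (hlyap : P = S + Mᵀ * P * M) {p : ℝ} (hp : 1 ≤ p)
    {v w : n → ℝ} (hv : v ⬝ᵥ P *ᵥ v ≤ p * (v ⬝ᵥ S *ᵥ v))
    (hw : w ⬝ᵥ P *ᵥ w ≤ v ⬝ᵥ S *ᵥ v / (4 * p ^ 2)) :
    (M *ᵥ v + w) ⬝ᵥ P *ᵥ (M *ᵥ v + w) ≤ v ⬝ᵥ P *ᵥ v - 1 / 4 * (v ⬝ᵥ S *ᵥ v) := by
  have hsplit := dotProduct_mulVec_eq_of_lyapunov hlyap v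
  have hq : 0 ≤ v ⬝ᵥ S *ᵥ v :=
    nonneg_of_mul_nonneg_right ((dotProduct_mulVec_nonneg_of_posSemidef hP v).trans hv)
      (zero_lt_one.trans_le hp)
  set V := v ⬝ᵥ P *ᵥ v
  set q := v ⬝ᵥ S *ᵥ v
  set e := M *ᵥ v ⬝ᵥ P *ᵥ (M *ᵥ v)
  have he : e ≤ (p - 1) * q := by linarith
  calc (M *ᵥ v + w) ⬝ᵥ P *ᵥ (M *ᵥ v + w)
    _ ≤ (1 + (2 * p)⁻¹) * e + (1 + (2 * p)⁻¹⁻¹) * (w ⬝ᵥ P *ᵥ w) :=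
      add_dotProduct_mulVec_add_le hP (by positivity) _ _
    _ = e + (2 * p)⁻¹ * e + (1 + 2 * p) * (w ⬝ᵥ P *ᵥ w) := by rw [inv_inv]; ring
    _ ≤ e + (2 * p)⁻¹ * ((p - 1) * q) + (1 + 2 * p) * (q / (4 * p ^ 2)) := by gcongr
    _ = e + q / 2 + q / (4 * p ^ 2) := by field_simp; ring
    _ ≤ e + q / 2 + q / 4 := by
      gcongr
      exact le_mul_of_one_le_right (by norm_num) (one_le_pow₀ hp)
    _ = V - 1 / 4 * q := by linarith

variable {x w : ℕ → n → ℝ} {p : ℝ}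

theorem summable_cost_of_perturbation_le {ρ : ℝ} (hP : P.PosSemidef) (hlyap : P = S + Mᵀ * P * M)
    (hp : 1 ≤ p) (hPS : ∀ v, v ⬝ᵥ P *ᵥ v ≤ p * (v ⬝ᵥ S *ᵥ v))
    (hx : ∀ t, x (t + 1) = M *ᵥ x t + w t)
    (hw : ∀ t, x t ⬝ᵥ P *ᵥ x t ≤ ρ → w t ⬝ᵥ P *ᵥ w t ≤ x t ⬝ᵥ S *ᵥ x t / (4 * p ^ 2))
    (h0 : x 0 ⬝ᵥ P *ᵥ x 0 ≤ ρ) : Summable fun t ↦ x t ⬝ᵥ S *ᵥ x t := by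
  have hV (t : ℕ) : 0 ≤ x t ⬝ᵥ P *ᵥ x t := dotProduct_mulVec_nonneg_of_posSemidef hP (x t)
  have hq (t : ℕ) : 0 ≤ x t ⬝ᵥ S *ᵥ x t :=
    nonneg_of_mul_nonneg_right ((hV t).trans (hPS (x t))) (zero_lt_one.trans_le hp)
  refine summable_of_decrease_on_sublevel (c := 1 / 4) (by norm_num) hV hq h0 fun t ht ↦ ?_
  simpa only [hx t] using lyapunov_step_le hP hlyap hp (hPS (x t)) (hw t ht)

theorem tsum_cost_sub_eq_tsum_perturbation (hP : P.PosSemidef) (hlyap : P = S + Mᵀ * P * M)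
    (hPS : ∀ v, v ⬝ᵥ P *ᵥ v ≤ p * (v ⬝ᵥ S *ᵥ v)) (hx : ∀ t, x (t + 1) = M *ᵥ x t + w t)
    (hsum : Summable fun t ↦ x t ⬝ᵥ S *ᵥ x t) :
    ∑' t, x t ⬝ᵥ S *ᵥ x t - x 0 ⬝ᵥ P *ᵥ x 0
      = ∑' t, w t ⬝ᵥ P *ᵥ (x (t + 1) + M *ᵥ x t) := by
  have hV : Summable fun t ↦ x t ⬝ᵥ P *ᵥ x t :=
    .of_nonneg_of_le (fun t ↦ dotProduct_mulVec_nonneg_of_posSemidef hP (x t))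
      (fun t ↦ hPS (x t)) (hsum.mul_left p)
  refine tsum_sub_zero_eq_tsum_of_succ_eq hV hsum fun t ↦ ?_
  simpa only [hx t] using lyapunov_step_eq (isSymm_of_posSemidef hP) hlyap (x t) (w t)

end PerturbedLinearSystem

section EuclideanNorm

variable {k l d : ℕ}

theorem evnorm_nonneg (v : Fin k → ℝ) : 0 ≤ evnorm v :=
  norm_nonneg _

theorem evnorm_sq (v : Fin k → ℝ) : evnorm v ^ 2 = v ⬝ᵥ v := by
  rw [evnorm, EuclideanSpace.norm_sq_eq]
  simp [dotProduct, sq]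

theorem evnorm_smul (c : ℝ) (v : Fin k → ℝ) : evnorm (c • v) = |c| * evnorm v :=
  norm_smul c (WithLp.toLp 2 v)

theorem evnorm_mulVec_le (P : Matrix (Fin k) (Fin l) ℝ) (v : Fin l → ℝ) :
    evnorm (P *ᵥ v) ≤ opNorm P * evnorm v :=
  (LinearMap.toContinuousLinearMap (toEuclideanLin P)).le_opNorm (WithLp.toLp 2 v)

theorem dotProduct_le_evnorm_mul_evnorm (v w : Fin k → ℝ) : v ⬝ᵥ w ≤ evnorm v * evnorm w := by
  simpa [evnorm, EuclideanSpace.inner_toLp_toLp, mul_comm] using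
    real_inner_le_norm (WithLp.toLp 2 w) (WithLp.toLp 2 v)

theorem dotProduct_mulVec_le_opNorm_mul (P : Matrix (Fin k) (Fin k) ℝ) (v : Fin k → ℝ) :
    v ⬝ᵥ P *ᵥ v ≤ opNorm P * evnorm v ^ 2 :=
  calc v ⬝ᵥ P *ᵥ v
    _ ≤ evnorm v * evnorm (P *ᵥ v) := dotProduct_le_evnorm_mul_evnorm _ _
    _ ≤ evnorm v * (opNorm P * evnorm v) := by
      gcongr
      exacts [evnorm_nonneg v, evnorm_mulVec_le P v]
    _ = opNorm P * evnorm v ^ 2 := by ring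

theorem evnorm_sq_le_of_posSemidef_sub_one {S : Matrix (Fin k) (Fin k) ℝ}
    (hS : (S - 1).PosSemidef) (v : Fin k → ℝ) : evnorm v ^ 2 ≤ v ⬝ᵥ S *ᵥ v := by
  simpa [evnorm_sq] using dotProduct_mulVec_le_of_posSemidef_sub hS v

theorem dotProduct_mulVec_le_opNorm_mul_dotProduct_mulVec (P : Matrix (Fin k) (Fin k) ℝ)
    {S : Matrix (Fin k) (Fin k) ℝ} (hS : (S - 1).PosSemidef) (v : Fin k → ℝ) :
    v ⬝ᵥ P *ᵥ v ≤ opNorm P * (v ⬝ᵥ S *ᵥ v) :=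
  (dotProduct_mulVec_le_opNorm_mul P v).trans
    (mul_le_mul_of_nonneg_left (evnorm_sq_le_of_posSemidef_sub_one hS v) (norm_nonneg _))

theorem one_le_opNorm_of_posSemidef_sub_one [NeZero k] {P : Matrix (Fin k) (Fin k) ℝ}
    (hP : (P - 1).PosSemidef) : 1 ≤ opNorm P := by
  have hone : 0 < evnorm (1 : Fin k → ℝ) ^ 2 := by
    simp [evnorm_sq, Nat.pos_of_neZero k]
  exact le_of_mul_le_mul_right (by
    simpa using (evnorm_sq_le_of_posSemidef_sub_one hP 1).trans
      (dotProduct_mulVec_le_opNorm_mul P 1)) hone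

theorem evnorm_add_evnorm_le {x : Fin k → ℝ} {u : Fin l → ℝ} {r : ℝ} (hr : 0 ≤ r)
    (h : 2 * (evnorm x ^ 2 + evnorm u ^ 2) ≤ r ^ 2) : evnorm x + evnorm u ≤ r :=
  le_of_sq_le_sq (add_sq_le.trans h) hr

theorem dotProduct_mulVec_le_div_of_evnorm_le {P : Matrix (Fin k) (Fin k) ℝ} (hp : 1 ≤ opNorm P)
    {w : Fin k → ℝ} {β q : ℝ} (hq : 0 ≤ q) (hw : evnorm w ≤ β * q)
    (hsmall : 4 * β ^ 2 * opNorm P ^ 3 * q ≤ 1) :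
    w ⬝ᵥ P *ᵥ w ≤ q / (4 * opNorm P ^ 2) :=
  calc w ⬝ᵥ P *ᵥ w
    _ ≤ opNorm P * evnorm w ^ 2 := dotProduct_mulVec_le_opNorm_mul P w
    _ ≤ opNorm P * (β * q) ^ 2 := by
      gcongr
      exact evnorm_nonneg w
    _ = q * (4 * β ^ 2 * opNorm P ^ 3 * q) / (4 * opNorm P ^ 2) := by field_simp
    _ ≤ q * 1 / (4 * opNorm P ^ 2) := by gcongr
    _ = q / (4 * opNorm P ^ 2) := by rw [mul_one]

theorem dotProduct_mulVec_remainder_le {P : Matrix (Fin d) (Fin d) ℝ} (hp : 1 ≤ opNorm P)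
    {β r q c : ℝ} (hβ : 1 ≤ β) (hr0 : 0 < r) (hr1 : r ≤ 1) (hc : |c| ≤ 1) {x : Fin k → ℝ}
    {u : Fin l → ℝ} {f : Fin d → ℝ}
    (hf : evnorm x + evnorm u ≤ r → evnorm f ≤ β * (evnorm x ^ 2 + evnorm u ^ 2))
    (hxu : evnorm x ^ 2 + evnorm u ^ 2 ≤ q) (hq : q ≤ r ^ 2 / (4 * β ^ 2 * opNorm P ^ 3)) :
    (c • f) ⬝ᵥ P *ᵥ (c • f) ≤ q / (4 * opNorm P ^ 2) := by
  have hq0 : 0 ≤ q := le_trans (by positivity) hxu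
  have hsmall : 4 * β ^ 2 * opNorm P ^ 3 * q ≤ r ^ 2 := by
    rwa [le_div_iff₀' (by positivity)] at hq
  have hdomain : evnorm x + evnorm u ≤ r := by
    refine evnorm_add_evnorm_le hr0.le ?_
    have hcoeff : 2 ≤ 4 * β ^ 2 * opNorm P ^ 3 := by
      linarith [one_le_mul_of_one_le_of_one_le (one_le_pow₀ hβ (n := 2)) (one_le_pow₀ hp (n := 3))]
    calc 2 * (evnorm x ^ 2 + evnorm u ^ 2)
      _ ≤ 4 * β ^ 2 * opNorm P ^ 3 * q := by gcongr
      _ ≤ r ^ 2 := hsmall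
  refine dotProduct_mulVec_le_div_of_evnorm_le hp hq0 ?_ (hsmall.trans (pow_le_one₀ hr0.le hr1))
  calc evnorm (c • f)
    _ = |c| * evnorm f := evnorm_smul c f
    _ ≤ evnorm f := mul_le_of_le_one_left (evnorm_nonneg f) hc
    _ ≤ β * (evnorm x ^ 2 + evnorm u ^ 2) := hf hdomain
    _ ≤ β * q := by gcongr

end EuclideanNorm

section ClosedLoop

variable {n l : Type*} [Finite n] [DecidableEq n] [Fintype l] [DecidableEq l] {Q : Matrix n n ℝ}
  {R : Matrix l l ℝ}

theorem posSemidef_add_transpose_mul_mul_sub (hQ : (Q - 1).PosSemidef) (hR : (R - 1).PosSemidef)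
    (K : Matrix l n ℝ) : (Q + Kᵀ * R * K - (1 + Kᵀ * K)).PosSemidef := by
  have hsplit : Q + Kᵀ * R * K - (1 + Kᵀ * K) = Q - 1 + Kᵀ * (R - 1) * K := by
    rw [Matrix.mul_sub, Matrix.sub_mul, Matrix.mul_one]
    abel
  exact hsplit ▸ hQ.add (posSemidef_transpose_mul_mul hR K)

theorem posSemidef_add_transpose_mul_mul_sub_one (hQ : (Q - 1).PosSemidef) (hR : (R - 1).PosSemidef)
    (K : Matrix l n ℝ) : (Q + Kᵀ * R * K - 1).PosSemidef := by
  have hK : (Kᵀ * K).PosSemidef := by simpa using posSemidef_conjTranspose_mul_self K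
  simpa [← sub_sub] using (posSemidef_add_transpose_mul_mul_sub hQ hR K).add hK

theorem evnorm_sq_add_evnorm_mulVec_sq_le {k m : ℕ} {Q : Matrix (Fin k) (Fin k) ℝ}
    {R : Matrix (Fin m) (Fin m) ℝ} (hQ : (Q - 1).PosSemidef) (hR : (R - 1).PosSemidef)
    (K : Matrix (Fin m) (Fin k) ℝ) (v : Fin k → ℝ) :
    evnorm v ^ 2 + evnorm (K *ᵥ v) ^ 2 ≤ v ⬝ᵥ (Q + Kᵀ * R * K) *ᵥ v :=
  calc evnorm v ^ 2 + evnorm (K *ᵥ v) ^ 2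
    _ = v ⬝ᵥ (1 + Kᵀ * K) *ᵥ v := by
      have hK := dotProduct_transpose_mul_mul_mulVec K 1 v
      rw [Matrix.mul_one, one_mulVec] at hK
      rw [add_mulVec, one_mulVec, dotProduct_add, hK, evnorm_sq, evnorm_sq]
    _ ≤ v ⬝ᵥ (Q + Kᵀ * R * K) *ᵥ v :=
      dotProduct_mulVec_le_of_posSemidef_sub (posSemidef_add_transpose_mul_mul_sub hQ hR K) v

end ClosedLoop

/-- Performance difference: the nonlinear cost converges, and its difference from the
linearized (Lyapunov) cost `x₀ᵀPx₀` is given by a series of cross terms involving the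
nonlinear remainder. -/
theorem performance_difference {d m : ℕ}
    (G : (Fin d → ℝ) → (Fin m → ℝ) → (Fin d → ℝ))
    (A : Matrix (Fin d) (Fin d) ℝ) (B : Matrix (Fin d) (Fin m) ℝ)
    (Q : Matrix (Fin d) (Fin d) ℝ) (R : Matrix (Fin m) (Fin m) ℝ)
    (K : Matrix (Fin m) (Fin d) ℝ)
    (β rnl : ℝ) (hβ : 1 ≤ β) (hrnl0 : 0 < rnl) (hrnl1 : rnl ≤ 1)
    (hf : ∀ (x : Fin d → ℝ) (u : Fin m → ℝ), evnorm x + evnorm u ≤ rnl →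
      evnorm (G x u - (A.mulVec x + B.mulVec u)) ≤ β * (evnorm x ^ 2 + evnorm u ^ 2))
    (γ : ℝ) (hγ : γ ∈ Set.Ioc (0 : ℝ) 1)
    (hQ : (Q - 1).PosSemidef) (hR : (R - 1).PosSemidef)
    (hstab : IsStable (Real.sqrt γ • (A + B * K)))
    (x : ℕ → Fin d → ℝ)
    (hstep : ∀ t : ℕ, x (t + 1) = Real.sqrt γ • G (x t) (K.mulVec (x t)))
    (hV0 : x 0 ⬝ᵥ (lyapP A B Q R K γ).mulVec (x 0)
        ≤ rnl ^ 2 / (4 * β ^ 2 * opNorm (lyapP A B Q R K γ) ^ 3)) :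
    Summable (fun t : ℕ => x t ⬝ᵥ (Q + Kᵀ * R * K).mulVec (x t))
    ∧ (∑' t : ℕ, x t ⬝ᵥ (Q + Kᵀ * R * K).mulVec (x t))
          - x 0 ⬝ᵥ (lyapP A B Q R K γ).mulVec (x 0)
        = ∑' t : ℕ,
            γ * ((G (x t) (K.mulVec (x t))
                    - (A.mulVec (x t) + B.mulVec (K.mulVec (x t))))
                  ⬝ᵥ (lyapP A B Q R K γ).mulVec
                      (G (x t) (K.mulVec (x t)) + (A + B * K).mulVec (x t))) := by
  obtain rfl | _ := eq_zero_or_neZero d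
  · simp [dotProduct]
  rw [lyapP_eq_lyapunovSeries A B Q R K hγ.1.le] at hV0 ⊢
  have hS := posSemidef_add_transpose_mul_mul_sub_one hQ hR K
  have hconv := hstab.summable_transpose_pow_mul_mul_pow (Q + Kᵀ * R * K)
  have hlyap := lyapunovSeries_eq_add hconv
  have hP := posSemidef_lyapunovSeries (posSemidef_of_posSemidef_sub_one hS) hconv
  set P := lyapunovSeries (√γ • (A + B * K)) (Q + Kᵀ * R * K)
  let f (t : ℕ) : Fin d → ℝ := G (x t) (K *ᵥ x t) - (A *ᵥ x t + B *ᵥ (K *ᵥ x t))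
  have hp : 1 ≤ opNorm P :=
    one_le_opNorm_of_posSemidef_sub_one (posSemidef_sub_one_of_lyapunov hP hS hlyap)
  have hPS := dotProduct_mulVec_le_opNorm_mul_dotProduct_mulVec P hS
  have hx (t : ℕ) : x (t + 1) = (√γ • (A + B * K)) *ᵥ x t + √γ • f t := by
    rw [hstep, smul_mulVec, ← smul_add, add_mulVec, ← mulVec_mulVec, add_sub_cancel]
  have hf_quad (t : ℕ) (ht : x t ⬝ᵥ P *ᵥ x t ≤ rnl ^ 2 / (4 * β ^ 2 * opNorm P ^ 3)) :=
    dotProduct_mulVec_remainder_le hp hβ hrnl0 hrnl1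
      (by simpa [abs_of_nonneg] using hγ.2 : |√γ| ≤ 1) (hf (x t) (K *ᵥ x t))
      (evnorm_sq_add_evnorm_mulVec_sq_le hQ hR K (x t))
      ((dotProduct_mulVec_le_of_lyapunov hP hlyap (x t)).trans ht)
  have hcost := summable_cost_of_perturbation_le hP hlyap hp hPS hx hf_quad hV0
  refine ⟨hcost, (tsum_cost_sub_eq_tsum_perturbation hP hlyap hPS hx hcost).trans ?_⟩
  refine tsum_congr fun t ↦ ?_
  rw [hstep, smul_mulVec, ← smul_add, mulVec_smul, dotProduct_smul, smul_dotProduct, smul_smul,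
    Real.mul_self_sqrt hγ.1.le, smul_eq_mul]
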